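/- No solenoid embeds into the 2-sphere: for any sequence of integers w₁, w₂, … with each wₙ > 1, there is no topological embedding of the solenoid Θ of type (w₁, w₂, …) into the 2-sphere S² = {v ∈ ℝ³ : ‖v‖ = 1}. -/

import Mathlib

open Topology

/-- The solenoid of type `(w 0, w 1, …)` (denoted `(w₁, w₂, …)` in the paper),
as a subgroup of the product of countably many circles:
`{(x₀, x₁, …) : xₙ₋₁ = xₙ ^ wₙ for all n ≥ 1}`. -/
noncomputable def solenoidSubgroup (w : ℕ → ℕ) : Subgroup (ℕ → Circle) where
  carrier := {x | ∀ n, x n = x (n + 1) ^ w n}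
  one_mem' := by intro n; simp
  mul_mem' := by intro a b ha hb n; simp only [Pi.mul_apply, ha n, hb n, mul_pow]
  inv_mem' := by intro a ha n; simp only [Pi.inv_apply, ha n, inv_pow]

/-- The solenoid as a topological space, with the subspace topology from the
product topology. -/
noncomputable abbrev Solenoid (w : ℕ → ℕ) : Type :=
  ↥(solenoidSubgroup w)


namespace SolenoidAux

open Set Filter

/-- A nonvanishing continuous function as a continuous map to units. -/
noncomputable def mkU {X : Type*} [TopologicalSpace X] (f : X → ℂ) (hf : Continuous f)
    (h0 : ∀ x, f x ≠ 0) : C(X, ℂˣ) :=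
  ⟨fun x => Units.mk0 (f x) (h0 x), by
    rw [Units.isEmbedding_val₀.continuous_iff]
    exact hf⟩

@[simp] theorem mkU_apply {X : Type*} [TopologicalSpace X] (f : X → ℂ) (hf : Continuous f)
    (h0 : ∀ x, f x ≠ 0) (x : X) : ((mkU f hf h0 x : ℂˣ) : ℂ) = f x := rfl

/-- Functions with a continuous logarithm. -/
noncomputable def logSub (X : Type*) [TopologicalSpace X] : Subgroup C(X, ℂˣ) where
  carrier := {f | ∃ g : X → ℂ, Continuous g ∧ ∀ x, (f x : ℂ) = Complex.exp (g x)}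
  one_mem' := ⟨fun _ => 0, continuous_const, by simp⟩
  mul_mem' := by
    rintro a b ⟨g, hg, h1⟩ ⟨g', hg', h1'⟩
    exact ⟨fun x => g x + g' x, hg.add hg', fun x => by simp [h1, h1', Complex.exp_add]⟩
  inv_mem' := by
    rintro a ⟨g, hg, h1⟩
    exact ⟨fun x => - g x, hg.neg, fun x => by simp [h1, Complex.exp_neg]⟩

theorem mem_logSub {X : Type*} [TopologicalSpace X] {f : C(X, ℂˣ)} :
    f ∈ logSub X ↔ ∃ g : X → ℂ, Continuous g ∧ ∀ x, (f x : ℂ) = Complex.exp (g x) := Iff.rfl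

open Classical in
/-- The function `z - c` on `X` (or `1` if `c ∈ X`). -/
noncomputable def lin (X : Set ℂ) (c : ℂ) : C(X, ℂˣ) :=
  if h : c ∈ X then 1 else
    mkU (fun x : X => (x : ℂ) - c) (by fun_prop) (fun x hx => h (by
      have := sub_eq_zero.1 hx
      rw [← this]; exact x.2))

theorem lin_apply {X : Set ℂ} {c : ℂ} (h : c ∉ X) (x : X) : ((lin X c x : ℂˣ) : ℂ) = x - c := by
  simp [lin, h]

theorem lin_of_mem {X : Set ℂ} {c : ℂ} (h : c ∈ X) : lin X c = 1 := by
  simp [lin, h]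

/-- A logarithm of `1` is constant on preconnected spaces. -/
theorem const_of_exp_eq_one {Y : Type*} [TopologicalSpace Y] [PreconnectedSpace Y]
    (φ : Y → ℂ) (hφ : Continuous φ) (h : ∀ y, Complex.exp (φ y) = 1) (y y' : Y) :
    φ y = φ y' := by
  have hl : IsLocallyConstant φ := by
    rw [IsLocallyConstant.iff_eventually_eq]
    intro x
    have := Metric.tendsto_nhds.1 (hφ.tendsto x) (2 * Real.pi) (by positivity)
    filter_upwards [this] with z hz
    have h1 : Complex.exp (φ z) = Complex.exp (φ x) := by rw [h, h]
    obtain ⟨n, hn⟩ := Complex.exp_eq_exp_iff_exists_int.1 h1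
    rw [hn, dist_eq_norm] at hz
    have : ‖(n : ℂ) * (2 * Real.pi * Complex.I)‖ = |(n : ℝ)| * (2 * Real.pi) := by
      simp [abs_of_pos Real.pi_pos]
    rw [add_sub_cancel_left, this] at hz
    have h2 : |(n : ℝ)| < 1 := by
      by_contra hc
      push Not at hc
      nlinarith [Real.pi_pos]
    have h3 : n = 0 := by
      have : |n| < 1 := by exact_mod_cast h2
      exact Int.abs_lt_one_iff.1 this
    rw [hn, h3]; simp
  exact hl.apply_eq_of_preconnectedSpace y y'

/-- Continuous logs on the plane. -/
theorem exists_log_plane (F : ℂ → ℂ) (hF : Continuous F) (h0 : ∀ z, F z ≠ 0) :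
    ∃ g : ℂ → ℂ, Continuous g ∧ ∀ z, F z = Complex.exp (g z) := by
  obtain ⟨f, ⟨-, hf⟩, -⟩ := Complex.isCoveringMapOn_exp.existsUnique_continuousMap_lifts
    (⟨F, hF⟩ : C(ℂ, ℂ)) (a₀ := 0) (e₀ := Complex.log (F 0)) (by simp [Complex.exp_log (h0 0)])
    (fun x ↦ by simpa using h0 x)
  exact ⟨f, f.continuous, fun z => (congrFun hf z).symm⟩

/-- Winding number argument. -/
theorem winding_zero (g : ℂ → ℂ) (hg : Continuous g) (c : ℂ) (k : ℤ) (M : ℝ)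
    (h : ∀ z, M ≤ ‖z‖ → (z - c) ^ k = Complex.exp (g z)) : k = 0 := by
  set R : ℝ := |M| + ‖c‖ + 1 with hR
  have hRpos : 0 < R := by positivity
  let z : ℝ → ℂ := fun θ => c + R * Complex.exp (θ * Complex.I)
  have hz : ∀ θ, M ≤ ‖z θ‖ := by
    intro θ
    have h1 : ‖(R : ℂ) * Complex.exp (θ * Complex.I)‖ = R := by
      rw [norm_mul, Complex.norm_exp_ofReal_mul_I]; simp [abs_of_pos hRpos]
    have h2 : ‖(R : ℂ) * Complex.exp (θ * Complex.I)‖ ≤ ‖z θ‖ + ‖c‖ := by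
      have : (R : ℂ) * Complex.exp (θ * Complex.I) = z θ - c := by simp [z]
      rw [this]; exact norm_sub_le _ _
    have := le_abs_self M
    linarith
  let φ : ℝ → ℂ := fun θ => g (z θ) - k * (Real.log R + θ * Complex.I)
  have hφ : Continuous φ := by fun_prop
  have h1 : ∀ θ, Complex.exp (φ θ) = 1 := by
    intro θ
    have hh := h (z θ) (hz θ)
    have e1 : z θ - c = Complex.exp (Real.log R + θ * Complex.I) := by
      rw [Complex.exp_add, ← Complex.ofReal_exp, Real.exp_log hRpos]; simp [z]
    rw [e1, ← Complex.exp_int_mul] at hh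
    simp only [φ]
    rw [Complex.exp_sub, ← hh, div_self (Complex.exp_ne_zero _)]
  have h2 := const_of_exp_eq_one φ hφ h1 0 (2 * Real.pi)
  have h3 : z 0 = z (2 * Real.pi) := by simp [z]
  simp only [φ, h3] at h2
  have h4 : (k : ℂ) * (2 * Real.pi * Complex.I) = 0 := by
    push_cast at h2
    linear_combination (norm := (push_cast; ring_nf)) h2
  have h5 : (2 * Real.pi * Complex.I : ℂ) ≠ 0 := Complex.two_pi_I_ne_zero
  have := (mul_eq_zero.1 h4).resolve_right h5
  exact_mod_cast this

/-- The group of continuous maps to `ℂˣ` modulo exponentials. -/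
def Coh (X : Set ℂ) : Type := Additive (C(X, ℂˣ) ⧸ logSub X)

noncomputable instance (X : Set ℂ) : AddCommGroup (Coh X) :=
  @Additive.addCommGroup _ (QuotientGroup.Quotient.commGroup (logSub X))

/-- The class of a map. -/
noncomputable def cls {X : Set ℂ} (f : C(X, ℂˣ)) : Coh X := Additive.ofMul (QuotientGroup.mk f)

theorem cls_eq_zero {X : Set ℂ} {f : C(X, ℂˣ)} : cls f = 0 ↔ f ∈ logSub X := by
  rw [← QuotientGroup.eq_one_iff]; exact Iff.rfl

theorem cls_mul {X : Set ℂ} (f g : C(X, ℂˣ)) : cls (f * g) = cls f + cls g := rfl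

theorem cls_inv {X : Set ℂ} (f : C(X, ℂˣ)) : cls (f⁻¹) = - cls f := rfl

theorem cls_one {X : Set ℂ} : cls (1 : C(X, ℂˣ)) = 0 := rfl

theorem cls_pow {X : Set ℂ} (f : C(X, ℂˣ)) (n : ℕ) : cls (f ^ n) = n • cls f := rfl

theorem cls_zpow {X : Set ℂ} (f : C(X, ℂˣ)) (n : ℤ) : cls (f ^ n) = n • cls f := rfl

theorem cls_prod {X : Set ℂ} {ι : Type*} (s : Finset ι) (f : ι → C(X, ℂˣ)) :
    cls (∏ i ∈ s, f i) = ∑ i ∈ s, cls (f i) := by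
  classical
  induction s using Finset.induction_on with
  | empty => simp [cls_one]
  | insert a s ha ih => rw [Finset.prod_insert ha, Finset.sum_insert ha, cls_mul, ih]

theorem cls_eq {X : Set ℂ} {f g : C(X, ℂˣ)} (h : f * g⁻¹ ∈ logSub X) : cls f = cls g := by
  rw [← cls_eq_zero, cls_mul, cls_inv] at h
  exact add_neg_eq_zero.1 h

theorem class_open {X : Set ℂ} (hX : IsCompact X) {c : ℂ} (hc : c ∉ X) :
    ∀ᶠ a in 𝓝 c, a ∉ X ∧ cls (lin X a) = cls (lin X c) := by
  obtain ⟨ε, hε, hb⟩ := Metric.isOpen_iff.1 hX.isClosed.isOpen_compl c hc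
  filter_upwards [Metric.ball_mem_nhds c hε] with a ha
  have haX : a ∉ X := hb ha
  refine ⟨haX, cls_eq ?_⟩
  have h0 : ∀ x : X, (x : ℂ) - c ≠ 0 := fun x hx => hc (by rw [← sub_eq_zero.1 hx]; exact x.2)
  have hs : ∀ x : X, 1 + (c - a) / ((x : ℂ) - c) ∈ Complex.slitPlane := by
    intro x
    apply Complex.mem_slitPlane_of_norm_lt_one
    rw [norm_div, div_lt_one (norm_pos_iff.2 (h0 x))]
    have h1 : ε ≤ ‖(x : ℂ) - c‖ := by
      by_contra hlt
      push Not at hlt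
      exact hb (show (x : ℂ) ∈ Metric.ball c ε by rwa [mem_ball_iff_norm]) x.2
    have h2 : ‖c - a‖ < ε := by rw [norm_sub_rev]; rwa [mem_ball_iff_norm] at ha
    linarith
  refine ⟨fun x => Complex.log (1 + (c - a) / ((x : ℂ) - c)), ?_, ?_⟩
  · refine Continuous.clog ?_ hs
    exact continuous_const.add (continuous_const.div (by fun_prop) h0)
  · intro x
    rw [Complex.exp_log (Complex.slitPlane_ne_zero (hs x))]
    have := h0 x
    simp only [ContinuousMap.mul_apply, ContinuousMap.inv_apply, Units.val_mul,
      Units.val_inv_eq_inv_val, lin_apply haX, lin_apply hc]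
    field_simp
    ring

theorem class_far {X : Set ℂ} (hX : IsCompact X) :
    ∃ M : ℝ, ∀ a : ℂ, M ≤ ‖a‖ → a ∉ X ∧ cls (lin X a) = 0 := by
  obtain ⟨M, hM⟩ := hX.isBounded.exists_norm_le
  refine ⟨|M| + 1, fun a ha => ?_⟩
  have hlt : ∀ x ∈ X, ‖x‖ < ‖a‖ := fun x hx => by
    have := hM x hx
    have := le_abs_self M
    linarith
  have haX : a ∉ X := fun h => lt_irrefl _ (hlt a h)
  refine ⟨haX, cls_eq_zero.2 ?_⟩
  have hap : 0 < ‖a‖ := by have := abs_nonneg M; linarith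
  have ha0 : a ≠ 0 := norm_pos_iff.1 hap
  have hs : ∀ x : X, 1 + (- x / a) ∈ Complex.slitPlane := by
    intro x
    apply Complex.mem_slitPlane_of_norm_lt_one
    rw [norm_div, div_lt_one hap, norm_neg]
    exact hlt x x.2
  refine ⟨fun x => Complex.log (1 + (- x / a)) + Complex.log (-a), ?_, ?_⟩
  · exact (Continuous.clog (by fun_prop) hs).add continuous_const
  · intro x
    rw [Complex.exp_add, Complex.exp_log (Complex.slitPlane_ne_zero (hs x)),
      Complex.exp_log (neg_ne_zero.2 ha0), lin_apply haX]
    field_simp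
    ring

theorem prod_zpow_apply {X : Set ℂ} {ι : Type*} (s : Finset ι) (c : ι → ℂ) (k : ι → ℤ)
    (hc : ∀ i ∈ s, c i ∉ X) (x : X) :
    (((∏ i ∈ s, lin X (c i) ^ k i) x : ℂˣ) : ℂ) = ∏ i ∈ s, ((x : ℂ) - c i) ^ k i := by
  classical
  induction s using Finset.induction_on with
  | empty => simp
  | insert a s ha ih =>
    rw [Finset.prod_insert ha, Finset.prod_insert ha, ContinuousMap.mul_apply, Units.val_mul,
      ih (fun i hi => hc i (Finset.mem_insert_of_mem hi)), ContinuousMap.zpow_apply,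
      Units.val_zpow_eq_zpow_val, lin_apply (hc a (Finset.mem_insert_self _ _))]

/-- The nonzero classes of linear functions. -/
def clsSet (X : Set ℂ) : Set (Coh X) := {e | e ≠ 0 ∧ ∃ c, e = cls (lin X c)}

theorem clsSet_indep {X : Set ℂ} (hX : IsCompact X) :
    LinearIndependent ℤ (fun e : clsSet X => (e : Coh X)) := by
  classical
  rw [linearIndependent_iff']
  intro s k hsum i hi
  have hch : ∀ e : clsSet X, ∃ c, c ∉ X ∧ (e : Coh X) = cls (lin X c) := by
    rintro ⟨e, he, c, hc⟩
    refine ⟨c, fun hcX => he ?_, hc⟩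
    rw [hc, lin_of_mem hcX, cls_one]
  choose c hcX hc using hch
  have h1 : (∏ j ∈ s, lin X (c j) ^ k j) ∈ logSub X := by
    rw [← cls_eq_zero, cls_prod, ← hsum]
    exact Finset.sum_congr rfl fun j _ => by rw [cls_zpow, ← hc]
  obtain ⟨γ, hγ, hγe⟩ := h1
  obtain ⟨γ', hγ'⟩ := ContinuousMap.exists_restrict_eq hX.isClosed (⟨γ, hγ⟩ : C(X, ℂ))
  have hγ'' : ∀ x (hx : x ∈ X), γ' x = γ ⟨x, hx⟩ := fun x hx => by
    have := DFunLike.congr_fun hγ' ⟨x, hx⟩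
    simpa using this
  let K : Set ℂ := {a | a ∉ X ∧ cls (lin X a) = i}
  have hKopen : IsOpen K := by
    rw [isOpen_iff_mem_nhds]
    rintro a ⟨ha, hai⟩
    filter_upwards [class_open hX ha] with b hb
    exact ⟨hb.1, hb.2.trans hai⟩
  have hKcl : closure K ⊆ K ∪ X := by
    intro a ha
    by_cases haX : a ∈ X
    · exact Or.inr haX
    left
    obtain ⟨b, hb1, hb2⟩ := (mem_closure_iff_frequently.1 ha).and_eventually
      (class_open hX haX) |>.exists
    exact ⟨haX, hb2.2.symm.trans hb1.2⟩
  have hKfr : frontier K ⊆ X := by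
    intro a ha
    rcases hKcl ha.1 with h | h
    · exact absurd (by rwa [hKopen.interior_eq]) ha.2
    · exact h
  have hiK : c i ∈ K := ⟨hcX i, (hc i).symm⟩
  have hjK : ∀ j ∈ s.erase i, c j ∉ K := by
    intro j hj hjK
    have : (j : Coh X) = i := (hc j).trans hjK.2
    exact (Finset.ne_of_mem_erase hj) (Subtype.ext this)
  let A : ℂ → ℂ := fun z => Complex.exp (γ' z) * (∏ j ∈ s.erase i, (z - c j) ^ k j)⁻¹
  let B : ℂ → ℂ := fun z => (z - c i) ^ k i
  have hne : ∀ z ∈ closure K, ∀ j ∈ s.erase i, z - c j ≠ 0 := by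
    intro z hz j hj h0
    rw [sub_eq_zero.1 h0] at hz
    rcases hKcl hz with h | h
    · exact hjK j hj h
    · exact hcX j h
  have hA0 : ∀ z ∈ closure K, A z ≠ 0 := by
    intro z hz
    refine mul_ne_zero (Complex.exp_ne_zero _) (inv_ne_zero ?_)
    exact Finset.prod_ne_zero_iff.2 fun j hj => zpow_ne_zero _ (hne z hz j hj)
  have hneB : ∀ z ∉ K, z - c i ≠ 0 := by
    intro z hz h0
    rw [sub_eq_zero.1 h0] at hz
    exact hz hiK
  have hAc : ContinuousOn A (closure K) := by
    refine ContinuousOn.mul (by fun_prop) (ContinuousOn.inv₀ ?_ ?_)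
    · refine continuousOn_finsetProd _ fun j hj => ?_
      exact ContinuousOn.zpow₀ (by fun_prop) _ fun z hz => Or.inl (hne z hz j hj)
    · intro z hz
      exact Finset.prod_ne_zero_iff.2 fun j hj => zpow_ne_zero _ (hne z hz j hj)
  have hBc : ContinuousOn B (closure Kᶜ) := by
    rw [hKopen.isClosed_compl.closure_eq]
    exact ContinuousOn.zpow₀ (by fun_prop) _ fun z hz => Or.inl (hneB z hz)
  have hAB : ∀ z ∈ frontier K, A z = B z := by
    intro z hz
    have hzX := hKfr hz
    have h1 := hγe ⟨z, hzX⟩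
    rw [prod_zpow_apply s c k (fun j _ => hcX j), ← hγ'' z hzX, ← Finset.mul_prod_erase s _ hi] at h1
    simp only [A, B]
    rw [← h1, mul_assoc, mul_inv_cancel₀, mul_one]
    exact Finset.prod_ne_zero_iff.2 fun j hj => zpow_ne_zero _ (hne z hz.1 j hj)
  have hF := continuous_piecewise hAB hAc hBc
  have hF0 : ∀ z, K.piecewise A B z ≠ 0 := by
    intro z
    by_cases hz : z ∈ K
    · rw [piecewise_eq_of_mem _ _ _ hz]; exact hA0 z (subset_closure hz)
    · rw [piecewise_eq_of_notMem _ _ _ hz]; exact zpow_ne_zero _ (hneB z hz)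
  obtain ⟨g, hg, hge⟩ := exists_log_plane _ hF hF0
  obtain ⟨M, hM⟩ := class_far hX
  refine winding_zero g hg (c i) (k i) M fun z hz => ?_
  rw [← hge, piecewise_eq_of_notMem]
  intro hzK
  exact i.2.1 (hzK.2.symm.trans (hM z hz).2)

/-- Existence of a continuous logarithm on part of `X`. -/
def LogOn (X : Set ℂ) (f : C(X, ℂˣ)) (R : Set ℂ) : Prop :=
  ∃ g : X → ℂ, ContinuousOn g (Subtype.val ⁻¹' R) ∧
    ∀ x : X, (x : ℂ) ∈ R → ((f x : ℂˣ) : ℂ) = Complex.exp (g x)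

theorem LogOn.one (X R : Set ℂ) : LogOn X 1 R :=
  ⟨fun _ => 0, continuousOn_const, by simp⟩

theorem LogOn.mul {X R : Set ℂ} {f f' : C(X, ℂˣ)} (h : LogOn X f R) (h' : LogOn X f' R) :
    LogOn X (f * f') R := by
  obtain ⟨g, hg, hge⟩ := h
  obtain ⟨g', hg', hge'⟩ := h'
  exact ⟨fun x => g x + g' x, hg.add hg', fun x hx => by
    simp [hge x hx, hge' x hx, Complex.exp_add]⟩

theorem LogOn.inv {X R : Set ℂ} {f : C(X, ℂˣ)} (h : LogOn X f R) :
    LogOn X f⁻¹ R := by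
  obtain ⟨g, hg, hge⟩ := h
  exact ⟨fun x => - g x, hg.neg, fun x hx => by
    simp [hge x hx, Complex.exp_neg]⟩

/-- Group generated by linear functions with centre in `R`. -/
noncomputable def Hsub (X R : Set ℂ) : Subgroup C(X, ℂˣ) := Subgroup.closure (lin X '' R)

theorem Hsub_mono (X : Set ℂ) {R S : Set ℂ} (h : R ⊆ S) : Hsub X R ≤ Hsub X S :=
  Subgroup.closure_mono (image_mono h)

theorem lin_mem_Hsub (X : Set ℂ) {R : Set ℂ} {c : ℂ} (h : c ∈ R) : lin X c ∈ Hsub X R :=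
  Subgroup.subset_closure ⟨c, h, rfl⟩

/-- `f` is, on `R`, an exponential times a product of linear functions with centres in `R`. -/
def Good (X : Set ℂ) (f : C(X, ℂˣ)) (R : Set ℂ) : Prop :=
  ∃ r ∈ Hsub X R, LogOn X (f * r⁻¹) R

theorem mem_slit_of_re_nonneg {z : ℂ} (h : 0 ≤ z.re) (h0 : z ≠ 0) : z ∈ Complex.slitPlane := by
  rw [Complex.mem_slitPlane_iff]
  by_contra hc
  push Not at hc
  exact h0 (Complex.ext (le_antisymm hc.1 h) hc.2)

theorem logOn_lin {X R : Set ℂ} {c u : ℂ} (hu : u ≠ 0)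
    (h : ∀ z ∈ R, 0 ≤ (u * (z - c)).re) : LogOn X (lin X c) R := by
  by_cases hc : c ∈ X
  · rw [lin_of_mem hc]; exact LogOn.one _ _
  have hs : ∀ x : X, (x : ℂ) ∈ R → u * (x - c) ∈ Complex.slitPlane := by
    intro x hx
    refine mem_slit_of_re_nonneg (h x hx) (mul_ne_zero hu ?_)
    intro h0
    exact hc (by rw [← sub_eq_zero.1 h0]; exact x.2)
  refine ⟨fun x => Complex.log (u * (x - c)) + Complex.log u⁻¹, ?_, ?_⟩
  · exact (ContinuousOn.clog (by fun_prop) hs).add continuousOn_const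
  · intro x hx
    rw [Complex.exp_add, Complex.exp_log (Complex.slitPlane_ne_zero (hs x hx)),
      Complex.exp_log (inv_ne_zero hu), lin_apply hc]
    field_simp

theorem logOn_Hsub {X R S : Set ℂ} {u : ℂ} (hu : u ≠ 0)
    (h : ∀ z ∈ R, ∀ c ∈ S, 0 ≤ (u * (z - c)).re) {r : C(X, ℂˣ)} (hr : r ∈ Hsub X S) :
    LogOn X r R := by
  induction hr using Subgroup.closure_induction with
  | mem f hf =>
    obtain ⟨c, hc, rfl⟩ := hf
    exact logOn_lin hu fun z hz => h z hz c hc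
  | one => exact LogOn.one _ _
  | mul a b _ _ ha hb => exact ha.mul hb
  | inv a _ ha => exact ha.inv

theorem log_I_mul {y : ℝ} (hy : 0 < y) :
    Complex.log (-(y * Complex.I)) - Real.pi * Complex.I - Complex.log (y * Complex.I)
      = -(2 * Real.pi * Complex.I) := by
  rw [← mul_neg, Complex.log_ofReal_mul hy (by simp), Complex.log_ofReal_mul hy (by simp),
    Complex.log_I, Complex.log_neg_I]
  ring

theorem log_I_mul' {y : ℝ} (hy : y < 0) :
    Complex.log (-(y * Complex.I)) - Real.pi * Complex.I - Complex.log (y * Complex.I)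
      = 0 := by
  have h1 : (y : ℂ) * Complex.I = ((-y : ℝ) : ℂ) * (- Complex.I) := by push_cast; ring
  rw [h1, ← mul_neg, neg_neg, Complex.log_ofReal_mul (by linarith) (by simp),
    Complex.log_ofReal_mul (by linarith) (by simp),
    Complex.log_I, Complex.log_neg_I]
  ring

/-- Two logs of `z - q` on the two sides of a line. -/
theorem two_logs {X R₁ R₂ : Set ℂ} {u q : ℂ} (hu : u ≠ 0) (hq : q ∉ X)
    (h₁ : ∀ z ∈ R₁, (u * (z - q)).re ≤ 0) (h₂ : ∀ z ∈ R₂, 0 ≤ (u * (z - q)).re) :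
    ∃ l₁ l₂ : X → ℂ, ContinuousOn l₁ (Subtype.val ⁻¹' R₁) ∧ ContinuousOn l₂ (Subtype.val ⁻¹' R₂) ∧
      (∀ x : X, (x : ℂ) ∈ R₁ → ((lin X q x : ℂˣ) : ℂ) = Complex.exp (l₁ x)) ∧
      (∀ x : X, (x : ℂ) ∈ R₂ → ((lin X q x : ℂˣ) : ℂ) = Complex.exp (l₂ x)) ∧
      (∀ x : X, (x : ℂ) ∈ R₁ → (x : ℂ) ∈ R₂ → (u * (x - q)).im < 0 → l₁ x - l₂ x = 0) ∧
      (∀ x : X, (x : ℂ) ∈ R₁ → (x : ℂ) ∈ R₂ → 0 < (u * (x - q)).im →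
        l₁ x - l₂ x = -(2 * Real.pi * Complex.I)) := by
  have hne : ∀ x : X, u * (x - q) ≠ 0 := fun x => mul_ne_zero hu fun h0 =>
    hq (by rw [← sub_eq_zero.1 h0]; exact x.2)
  have hs₂ : ∀ x : X, (x : ℂ) ∈ R₂ → u * (x - q) ∈ Complex.slitPlane := fun x hx =>
    mem_slit_of_re_nonneg (h₂ x hx) (hne x)
  have hs₁ : ∀ x : X, (x : ℂ) ∈ R₁ → -(u * (x - q)) ∈ Complex.slitPlane := fun x hx =>
    mem_slit_of_re_nonneg (by have := h₁ x hx; rw [Complex.neg_re]; linarith) (neg_ne_zero.2 (hne x))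
  have hline : ∀ x : X, (x : ℂ) ∈ R₁ → (x : ℂ) ∈ R₂ →
      u * (x - q) = ((u * (x - q)).im : ℝ) * Complex.I := by
    intro x hx1 hx2
    have := le_antisymm (h₁ x hx1) (h₂ x hx2)
    apply Complex.ext
    · simpa using this
    · simp
  refine ⟨fun x => Complex.log (-(u * (x - q))) - Real.pi * Complex.I + Complex.log u⁻¹,
    fun x => Complex.log (u * (x - q)) + Complex.log u⁻¹, ?_, ?_, ?_, ?_, ?_, ?_⟩
  · exact ((ContinuousOn.clog (by fun_prop) hs₁).sub continuousOn_const).add continuousOn_const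
  · exact (ContinuousOn.clog (by fun_prop) hs₂).add continuousOn_const
  · intro x hx
    rw [Complex.exp_add, Complex.exp_sub, Complex.exp_log (neg_ne_zero.2 (hne x)),
      Complex.exp_log (inv_ne_zero hu), lin_apply hq, Complex.exp_pi_mul_I]
    field_simp
  · intro x hx
    rw [Complex.exp_add, Complex.exp_log (hne x), Complex.exp_log (inv_ne_zero hu), lin_apply hq]
    field_simp
  · intro x hx1 hx2 him
    have h := log_I_mul' him
    rw [← hline x hx1 hx2] at h
    linear_combination h
  · intro x hx1 hx2 him
    have h := log_I_mul him
    rw [← hline x hx1 hx2] at h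
    linear_combination h

theorem eq_of_exp_eq_one_of_lt {a b : ℂ} (ha : Complex.exp a = 1) (hb : Complex.exp b = 1)
    (hd : dist a b < 2 * Real.pi) : a = b := by
  obtain ⟨n, hn⟩ := Complex.exp_eq_exp_iff_exists_int.1 (ha.trans hb.symm)
  rw [hn, dist_eq_norm] at hd
  have : ‖(n : ℂ) * (2 * Real.pi * Complex.I)‖ = |(n : ℝ)| * (2 * Real.pi) := by
    simp [abs_of_pos Real.pi_pos]
  rw [add_sub_cancel_left, this] at hd
  have h2 : |(n : ℝ)| < 1 := by
    by_contra hc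
    push Not at hc
    nlinarith [Real.pi_pos]
  have h3 : n = 0 := by
    have : |n| < 1 := by exact_mod_cast h2
    exact Int.abs_lt_one_iff.1 this
  rw [hn, h3]; simp

theorem jump {X R₁ R₂ : Set ℂ} (hX : IsClosed X) (hR₁ : IsClosed R₁) (hR₂ : IsClosed R₂)
    {u : ℂ} (hu : u ≠ 0) {t c d : ℝ} (hcd : c ≤ d)
    (h₁ : ∀ z ∈ R₁, (u * z).re ≤ t) (h₂ : ∀ z ∈ R₂, t ≤ (u * z).re)
    (hE : ∀ z ∈ R₁ ∩ R₂, (u * z).im ∈ Icc c d)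
    (hE' : ∀ y ∈ Icc c d, u⁻¹ * (t + y * Complex.I) ∈ R₁ ∩ R₂)
    (D : X → ℂ) (hD : ContinuousOn D (Subtype.val ⁻¹' (R₁ ∩ R₂)))
    (hD1 : ∀ x : X, (x : ℂ) ∈ R₁ ∩ R₂ → Complex.exp (D x) = 1) :
    ∃ r ∈ Hsub X (R₁ ∪ R₂), ∃ l₁ l₂ : X → ℂ,
      ContinuousOn l₁ (Subtype.val ⁻¹' R₁) ∧ ContinuousOn l₂ (Subtype.val ⁻¹' R₂) ∧
      (∀ x : X, (x : ℂ) ∈ R₁ → ((r x : ℂˣ) : ℂ) = Complex.exp (l₁ x)) ∧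
      (∀ x : X, (x : ℂ) ∈ R₂ → ((r x : ℂˣ) : ℂ) = Complex.exp (l₂ x)) ∧
      (∀ x : X, (x : ℂ) ∈ R₁ ∩ R₂ → l₁ x - l₂ x = D x) := by
  classical
  let ψ : ℝ → ℂ := fun y => u⁻¹ * (t + y * Complex.I)
  have hψc : Continuous ψ := by fun_prop
  have hψ : ∀ z ∈ R₁ ∩ R₂, ψ (u * z).im = z := by
    intro z hz
    have hre := le_antisymm (h₁ z hz.1) (h₂ z hz.2)
    have : (t + (u * z).im * Complex.I : ℂ) = u * z := by
      rw [← hre]; exact Complex.re_add_im _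
    simp only [ψ]
    rw [this, inv_mul_cancel_left₀ hu]
  have huψ : ∀ y, u * ψ y = t + y * Complex.I := fun y => by
    simp only [ψ]; rw [mul_inv_cancel_left₀ hu]
  -- local constancy
  have hloc : ∀ p : ℂ, ∃ W : Set ℂ, IsOpen W ∧ p ∈ W ∧ ∀ x x' : X, (x : ℂ) ∈ R₁ ∩ R₂ →
      (x' : ℂ) ∈ R₁ ∩ R₂ → (x : ℂ) ∈ W → (x' : ℂ) ∈ W → D x = D x' := by
    intro p
    by_cases hp : p ∈ X ∩ (R₁ ∩ R₂)
    · have h := hD ⟨p, hp.1⟩ hp.2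
      have h' := Metric.tendsto_nhds.1 h (2 * Real.pi) (by positivity)
      rw [eventually_nhdsWithin_iff, nhds_subtype_eq_comap, eventually_comap] at h'
      obtain ⟨W, hW, hWo, hpW⟩ := eventually_nhds_iff.1 h'
      have key : ∀ x : X, (x : ℂ) ∈ R₁ ∩ R₂ → (x : ℂ) ∈ W → D x = D ⟨p, hp.1⟩ := by
        intro x hx hxW
        exact eq_of_exp_eq_one_of_lt (hD1 x hx) (hD1 _ hp.2) (hW x hxW x rfl hx)
      exact ⟨W, hWo, hpW, fun x x' hx hx' hxW hxW' =>
        (key x hx hxW).trans (key x' hx' hxW').symm⟩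
    · exact ⟨(X ∩ (R₁ ∩ R₂))ᶜ, (hX.inter (hR₁.inter hR₂)).isOpen_compl, hp,
        fun x x' hx _ hxW _ => absurd ⟨x.2, hx⟩ hxW⟩
  choose W hWo hpW hW using hloc
  obtain ⟨s, hs0, hsm, ⟨m, hm⟩, hs⟩ := exists_monotone_Icc_subset_open_cover_Icc hcd
    (c := fun p : ℂ => {y : Icc c d | ψ y ∈ W p})
    (fun p => (hWo p).preimage (hψc.comp continuous_subtype_val))
    (fun y _ => mem_iUnion.2 ⟨ψ y, hpW _⟩)
  have hpiece : ∀ n, ∀ x x' : X, (x : ℂ) ∈ R₁ ∩ R₂ → (x' : ℂ) ∈ R₁ ∩ R₂ →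
      (u * x).im ∈ Icc (s n : ℝ) (s (n + 1)) → (u * x').im ∈ Icc (s n : ℝ) (s (n + 1)) →
      D x = D x' := by
    intro n x x' hx hx' hi hi'
    obtain ⟨p, hp⟩ := hs n
    have a1 := hp (show (⟨_, hE _ hx⟩ : Icc c d) ∈ Icc (s n) (s (n + 1)) from hi)
    have a2 := hp (show (⟨_, hE _ hx'⟩ : Icc c d) ∈ Icc (s n) (s (n + 1)) from hi')
    simp only [mem_ofPred_eq, hψ _ hx, hψ _ hx'] at a1 a2
    exact hW p x x' hx hx' a1 a2
  have main : ∀ n, ∃ r ∈ Hsub X (R₁ ∪ R₂), ∃ l₁ l₂ : X → ℂ,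
      ContinuousOn l₁ (Subtype.val ⁻¹' R₁) ∧ ContinuousOn l₂ (Subtype.val ⁻¹' R₂) ∧
      (∀ x : X, (x : ℂ) ∈ R₁ → ((r x : ℂˣ) : ℂ) = Complex.exp (l₁ x)) ∧
      (∀ x : X, (x : ℂ) ∈ R₂ → ((r x : ℂˣ) : ℂ) = Complex.exp (l₂ x)) ∧
      ∃ k : ℂ, Complex.exp k = 1 ∧
      (∀ x : X, (x : ℂ) ∈ R₁ ∩ R₂ → (u * x).im ≤ s n → l₁ x - l₂ x = D x) ∧
      (∀ x : X, (x : ℂ) ∈ R₁ ∩ R₂ → s n ≤ (u * x).im → l₁ x - l₂ x = k) := by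
    intro n
    induction n with
    | zero =>
      by_cases hq : ψ c ∈ X
      · have hqE : ψ c ∈ R₁ ∩ R₂ := hE' c ⟨le_rfl, hcd⟩
        have hk1 := hD1 ⟨ψ c, hq⟩ hqE
        refine ⟨1, one_mem _, fun _ => D ⟨ψ c, hq⟩, fun _ => 0, continuousOn_const,
          continuousOn_const, ?_, ?_, D ⟨ψ c, hq⟩, hk1, ?_, ?_⟩
        · intro x _; simp [hk1]
        · intro x _; simp
        · intro x hx hxi
          rw [hs0] at hxi
          have : (u * x).im = c := le_antisymm hxi (hE _ hx).1
          have h3 := hψ _ hx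
          rw [this] at h3
          simp [h3]
        · intro x _ _; simp
      · refine ⟨1, one_mem _, fun _ => 0, fun _ => 0, continuousOn_const,
          continuousOn_const, ?_, ?_, 0, by simp, ?_, ?_⟩
        · intro x _; simp
        · intro x _; simp
        · intro x hx hxi
          rw [hs0] at hxi
          have : (u * x).im = c := le_antisymm hxi (hE _ hx).1
          have h3 := hψ _ hx
          rw [this] at h3
          exact absurd (h3 ▸ x.2) hq
        · intro x _ _; simp
    | succ n ih =>
      obtain ⟨r, hr, l₁, l₂, hl₁, hl₂, he₁, he₂, k, hk, hb, ha⟩ := ih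
      have hmono : (s n : ℝ) ≤ s (n + 1) := hsm (Nat.le_succ n)
      by_cases hall : ∀ x : X, (x : ℂ) ∈ R₁ ∩ R₂ → (u * x).im ∈ Icc (s n : ℝ) (s (n + 1)) → D x = k
      · refine ⟨r, hr, l₁, l₂, hl₁, hl₂, he₁, he₂, k, hk, ?_, ?_⟩
        · intro x hx hxi
          rcases le_total (u * x).im (s n) with h | h
          · exact hb x hx h
          · rw [ha x hx h, hall x hx ⟨h, hxi⟩]
        · intro x hx hxi
          exact ha x hx (hmono.trans hxi)
      · push Not at hall
        obtain ⟨x₀, hx₀, hx₀i, hx₀k⟩ := hall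
        have hqE : ψ (s n) ∈ R₁ ∩ R₂ := hE' (s n) (s n).2
        have hqim : (u * ψ (s n)).im = s n := by rw [huψ]; simp
        have hqre : (u * ψ (s n)).re = t := by rw [huψ]; simp
        have hq : ψ (s n) ∉ X := by
          intro hq
          have e1 := hb ⟨_, hq⟩ hqE hqim.le
          have e2 := ha ⟨_, hq⟩ hqE hqim.ge
          have e3 := hpiece n ⟨_, hq⟩ x₀ hqE hx₀ ⟨hqim.ge, hqim.le.trans hmono⟩ hx₀i
          exact hx₀k (by rw [← e3, ← e1, e2])
        obtain ⟨m, hm⟩ := Complex.exp_eq_exp_iff_exists_int.1 ((hD1 x₀ hx₀).trans hk.symm)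
        obtain ⟨L₁, L₂, hL₁, hL₂, hLe₁, hLe₂, hLb, hLa⟩ := two_logs (X := X) (R₁ := R₁) (R₂ := R₂)
          hu hq (fun z hz => by rw [mul_sub, Complex.sub_re, hqre]; linarith [h₁ z hz])
          (fun z hz => by rw [mul_sub, Complex.sub_re, hqre]; linarith [h₂ z hz])
        have him : ∀ x : X, (u * (x - ψ (s n))).im = (u * x).im - s n := fun x => by
          rw [mul_sub, Complex.sub_im, hqim]
        have hxne : ∀ x : X, (x : ℂ) ∈ R₁ ∩ R₂ → (u * x).im ≠ s n := by
          intro x hx h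
          have h3 := hψ _ hx
          rw [h] at h3
          exact hq (h3 ▸ x.2)
        have habove : ∀ x : X, (x : ℂ) ∈ R₁ ∩ R₂ → s n ≤ (u * x).im →
            (l₁ x + (-m : ℤ) * L₁ x) - (l₂ x + (-m : ℤ) * L₂ x) = D x₀ := by
          intro x hx h
          have e1 := ha x hx h
          have e2 := hLa x hx.1 hx.2 (by
            rw [him]; have := lt_of_le_of_ne h (hxne x hx).symm; linarith)
          rw [hm]
          push_cast
          linear_combination e1 - m * e2
        refine ⟨r * lin X (ψ (s n)) ^ (-m), mul_mem hr (zpow_mem (lin_mem_Hsub X (Or.inl hqE.1)) _),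
          fun x => l₁ x + (-m : ℤ) * L₁ x, fun x => l₂ x + (-m : ℤ) * L₂ x,
          hl₁.add (continuousOn_const.mul hL₁), hl₂.add (continuousOn_const.mul hL₂), ?_, ?_,
          D x₀, hD1 x₀ hx₀, ?_, ?_⟩
        · intro x hx
          rw [ContinuousMap.mul_apply, ContinuousMap.zpow_apply, Units.val_mul,
            Units.val_zpow_eq_zpow_val, hLe₁ x hx, he₁ x hx, Complex.exp_add, Complex.exp_int_mul]
        · intro x hx
          rw [ContinuousMap.mul_apply, ContinuousMap.zpow_apply, Units.val_mul,
            Units.val_zpow_eq_zpow_val, hLe₂ x hx, he₂ x hx, Complex.exp_add, Complex.exp_int_mul]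
        · intro x hx hxi
          rcases le_total (u * x).im (s n) with h | h
          · have e1 := hb x hx h
            have e2 := hLb x hx.1 hx.2 (by
              rw [him]; have := lt_of_le_of_ne h (hxne x hx); linarith)
            push_cast
            linear_combination e1 - m * e2
          · rw [← hpiece n x₀ x hx₀ hx hx₀i ⟨h, hxi⟩]
            exact habove x hx h
        · intro x hx hxi
          exact habove x hx (hmono.trans hxi)
  obtain ⟨r, hr, l₁, l₂, hl₁, hl₂, he₁, he₂, k, hk, hb, ha⟩ := main m
  refine ⟨r, hr, l₁, l₂, hl₁, hl₂, he₁, he₂, fun x hx => hb x hx ?_⟩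
  rw [hm m le_rfl]
  exact (hE _ hx).2

theorem merge {X R₁ R₂ : Set ℂ} (hX : IsClosed X) (hR₁ : IsClosed R₁) (hR₂ : IsClosed R₂)
    {u : ℂ} (hu : u ≠ 0) {t c d : ℝ} (hcd : c ≤ d)
    (h₁ : ∀ z ∈ R₁, (u * z).re ≤ t) (h₂ : ∀ z ∈ R₂, t ≤ (u * z).re)
    (hE : ∀ z ∈ R₁ ∩ R₂, (u * z).im ∈ Icc c d)
    (hE' : ∀ y ∈ Icc c d, u⁻¹ * (t + y * Complex.I) ∈ R₁ ∩ R₂)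
    {f : C(X, ℂˣ)} (hf₁ : Good X f R₁) (hf₂ : Good X f R₂) : Good X f (R₁ ∪ R₂) := by
  classical
  obtain ⟨r₁, hr₁, hl₁⟩ := hf₁
  obtain ⟨r₂, hr₂, hl₂⟩ := hf₂
  have a₂ : LogOn X r₂ R₁ := logOn_Hsub (u := -u) (neg_ne_zero.2 hu) (fun z hz c hc => by
    have := h₁ z hz
    have := h₂ c hc
    rw [neg_mul, Complex.neg_re, mul_sub, Complex.sub_re]; linarith) hr₂
  have a₁ : LogOn X r₁ R₂ := logOn_Hsub hu (fun z hz c hc => by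
    have := h₂ z hz
    have := h₁ c hc
    rw [mul_sub, Complex.sub_re]; linarith) hr₁
  have b₁ : LogOn X (f * (r₁ * r₂)⁻¹) R₁ := by
    rw [mul_inv, ← mul_assoc]; exact hl₁.mul a₂.inv
  have b₂ : LogOn X (f * (r₁ * r₂)⁻¹) R₂ := by
    rw [mul_comm r₁, mul_inv, ← mul_assoc]; exact hl₂.mul a₁.inv
  obtain ⟨g₁, hg₁, he₁⟩ := b₁
  obtain ⟨g₂, hg₂, he₂⟩ := b₂
  obtain ⟨r, hr, l₁, l₂, hl₁, hl₂, hle₁, hle₂, hl⟩ := jump hX hR₁ hR₂ hu hcd h₁ h₂ hE hE'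
    (fun x => g₁ x - g₂ x)
    ((hg₁.mono (preimage_mono inter_subset_left)).sub (hg₂.mono (preimage_mono inter_subset_right)))
    (fun x hx => by
      rw [Complex.exp_sub, ← he₁ x hx.1, ← he₂ x hx.2, div_self (Units.ne_zero _)])
  refine ⟨(r₁ * r₂) * r, mul_mem (mul_mem (Hsub_mono X subset_union_left hr₁)
    (Hsub_mono X subset_union_right hr₂)) hr, ?_⟩
  rw [mul_inv, ← mul_assoc]
  set F := f * (r₁ * r₂)⁻¹ with hF
  let g : X → ℂ := fun x => if (x : ℂ) ∈ R₁ then g₁ x - l₁ x else g₂ x - l₂ x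
  have hgR₁ : ∀ x : X, (x : ℂ) ∈ R₁ → g x = g₁ x - l₁ x := fun x hx => by simp [g, hx]
  have hgR₂ : ∀ x : X, (x : ℂ) ∈ R₂ → g x = g₂ x - l₂ x := fun x hx => by
    by_cases hx1 : (x : ℂ) ∈ R₁
    · rw [hgR₁ x hx1]
      have := hl x ⟨hx1, hx⟩
      linear_combination -this
    · simp [g, hx1]
  refine ⟨g, ?_, ?_⟩
  · rw [preimage_union]
    refine ContinuousOn.union_of_isClosed ?_ ?_ (hR₁.preimage continuous_subtype_val)
      (hR₂.preimage continuous_subtype_val)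
    · exact (hg₁.sub hl₁).congr hgR₁
    · exact (hg₂.sub hl₂).congr hgR₂
  · rintro x (hx | hx)
    · rw [ContinuousMap.mul_apply, ContinuousMap.inv_apply, Units.val_mul,
        Units.val_inv_eq_inv_val, he₁ x hx, hle₁ x hx, hgR₁ x hx, Complex.exp_sub, div_eq_mul_inv]
    · rw [ContinuousMap.mul_apply, ContinuousMap.inv_apply, Units.val_mul,
        Units.val_inv_eq_inv_val, he₂ x hx, hle₂ x hx, hgR₂ x hx, Complex.exp_sub, div_eq_mul_inv]

theorem good_small {X : Set ℂ} (hX : IsCompact X) (f : C(X, ℂˣ)) :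
    ∃ δ > 0, ∀ R : Set ℂ, (∀ x ∈ R, ∀ y ∈ R, dist x y < δ) → Good X f R := by
  have : CompactSpace X := isCompact_iff_compactSpace.1 hX
  let F : X → ℂ := fun x => (f x : ℂˣ)
  have hFc : Continuous F := Units.continuous_val.comp f.continuous
  have hF0 : ∀ x, F x ≠ 0 := fun x => Units.ne_zero _
  have hq : UniformContinuous F := CompactSpace.uniformContinuous_of_continuous hFc
  have hmin : ∃ m > 0, ∀ x, m ≤ ‖F x‖ := by
    rcases isEmpty_or_nonempty X with h | h
    · exact ⟨1, one_pos, fun x => h.elim x⟩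
    · obtain ⟨x₀, -, hx₀⟩ := isCompact_univ.exists_isMinOn univ_nonempty hFc.norm.continuousOn
      exact ⟨‖F x₀‖, norm_pos_iff.2 (hF0 x₀), fun x => hx₀ (mem_univ x)⟩
  obtain ⟨m, hm, hmF⟩ := hmin
  obtain ⟨δ, hδ, hδF⟩ := Metric.uniformContinuous_iff.1 hq m hm
  refine ⟨δ, hδ, fun R hR => ⟨1, one_mem _, ?_⟩⟩
  rw [inv_one, mul_one]
  by_cases hne : ∃ p : X, (p : ℂ) ∈ R
  swap
  · exact ⟨fun _ => 0, continuousOn_const, fun x hx => absurd ⟨x, hx⟩ hne⟩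
  obtain ⟨p, hp⟩ := hne
  have hs : ∀ x : X, (x : ℂ) ∈ R → F x / F p ∈ Complex.slitPlane := by
    intro x hx
    have e : F x / F p = 1 + (F x - F p) / F p := by
      have := hF0 p
      field_simp
      ring
    rw [e]
    apply Complex.mem_slitPlane_of_norm_lt_one
    rw [norm_div, div_lt_one (norm_pos_iff.2 (hF0 p)), ← dist_eq_norm]
    exact lt_of_lt_of_le (hδF (hR x hx p hp)) (hmF p)
  refine ⟨fun x => Complex.log (F x / F p) + Complex.log (F p), ?_, ?_⟩
  · exact (ContinuousOn.clog (hFc.div_const _).continuousOn hs).add continuousOn_const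
  · intro x hx
    rw [Complex.exp_add, Complex.exp_log (Complex.slitPlane_ne_zero (hs x hx)),
      Complex.exp_log (hF0 p), div_mul_cancel₀ _ (hF0 p)]

/-- Closed boxes. -/
def Box (a b c d : ℝ) : Set ℂ := {z | z.re ∈ Icc a b ∧ z.im ∈ Icc c d}

theorem isClosed_Box (a b c d : ℝ) : IsClosed (Box a b c d) :=
  (isClosed_Icc.preimage Complex.continuous_re).inter (isClosed_Icc.preimage Complex.continuous_im)

theorem mem_Box {a b c d : ℝ} {z : ℂ} :
    z ∈ Box a b c d ↔ (a ≤ z.re ∧ z.re ≤ b) ∧ (c ≤ z.im ∧ z.im ≤ d) := Iff.rfl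

theorem merge_re {X : Set ℂ} (hX : IsClosed X) {f : C(X, ℂˣ)} {a s b c d : ℝ} (has : a ≤ s)
    (hsb : s ≤ b) (hcd : c ≤ d) (h1 : Good X f (Box a s c d)) (h2 : Good X f (Box s b c d)) :
    Good X f (Box a b c d) := by
  have : Box a b c d = Box a s c d ∪ Box s b c d := by
    ext z
    simp only [mem_union, mem_Box]
    constructor
    · rintro ⟨⟨h1, h2⟩, h3⟩
      rcases le_total z.re s with h | h
      · exact Or.inl ⟨⟨h1, h⟩, h3⟩
      · exact Or.inr ⟨⟨h, h2⟩, h3⟩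
    · rintro (⟨⟨h1, h2⟩, h3⟩ | ⟨⟨h1, h2⟩, h3⟩)
      · exact ⟨⟨h1, h2.trans hsb⟩, h3⟩
      · exact ⟨⟨has.trans h1, h2⟩, h3⟩
  rw [this]
  refine merge hX (isClosed_Box _ _ _ _) (isClosed_Box _ _ _ _) (u := 1) one_ne_zero (t := s)
    hcd ?_ ?_ ?_ ?_ h1 h2
  · intro z hz; simpa using hz.1.2
  · intro z hz; simpa using hz.1.1
  · intro z hz; simpa using hz.1.2
  · intro y hy
    simp only [mem_inter_iff, mem_Box]
    simp [has, hsb, hy.1, hy.2]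

theorem merge_im {X : Set ℂ} (hX : IsClosed X) {f : C(X, ℂˣ)} {a b c s d : ℝ} (hab : a ≤ b)
    (hcs : c ≤ s) (hsd : s ≤ d) (h1 : Good X f (Box a b c s)) (h2 : Good X f (Box a b s d)) :
    Good X f (Box a b c d) := by
  have : Box a b c d = Box a b c s ∪ Box a b s d := by
    ext z
    simp only [mem_union, mem_Box]
    constructor
    · rintro ⟨h3, ⟨h1, h2⟩⟩
      rcases le_total z.im s with h | h
      · exact Or.inl ⟨h3, ⟨h1, h⟩⟩
      · exact Or.inr ⟨h3, ⟨h, h2⟩⟩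
    · rintro (⟨h3, ⟨h1, h2⟩⟩ | ⟨h3, ⟨h1, h2⟩⟩)
      · exact ⟨h3, ⟨h1, h2.trans hsd⟩⟩
      · exact ⟨h3, ⟨hcs.trans h1, h2⟩⟩
  rw [this]
  refine merge hX (isClosed_Box _ _ _ _) (isClosed_Box _ _ _ _) (u := -Complex.I) (by simp) (t := s)
    (c := -b) (d := -a) (neg_le_neg hab) ?_ ?_ ?_ ?_ h1 h2
  · intro z hz; simpa using hz.2.2
  · intro z hz; simpa using hz.2.1
  · intro z hz
    have := hz.1.1
    simp only [mem_Icc] at this ⊢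
    simp
    exact ⟨this.2, this.1⟩
  · intro y hy
    simp only [mem_inter_iff, mem_Box]
    have := hy.1
    have := hy.2
    simp [hcs, hsd]
    constructor <;> linarith

theorem spanning {X : Set ℂ} (hX : IsCompact X) (f : C(X, ℂˣ)) :
    ∃ r ∈ Hsub X univ, f * r⁻¹ ∈ logSub X := by
  obtain ⟨δ, hδ, hsm⟩ := good_small hX f
  set η := δ / 3 with hη
  have hηpos : 0 < η := by positivity
  have hbox : ∀ a c b d : ℝ, b ≤ a + η → d ≤ c + η → Good X f (Box a b c d) := by
    intro a c b d hb hd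
    apply hsm
    intro x hx y hy
    rw [mem_Box] at hx hy
    rw [Complex.dist_eq]
    refine lt_of_le_of_lt (Complex.norm_le_abs_re_add_abs_im _) ?_
    have h1 : |(x - y).re| ≤ η := by rw [Complex.sub_re, abs_le]; constructor <;> linarith
    have h2 : |(x - y).im| ≤ η := by rw [Complex.sub_im, abs_le]; constructor <;> linarith
    linarith
  have hrow : ∀ (a c : ℝ) (n : ℕ), Good X f (Box a (a + n * η) c (c + η)) := by
    intro a c n
    induction n with
    | zero => exact hbox _ _ _ _ (by simp [hηpos.le]) le_rfl
    | succ n ih =>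
      refine merge_re hX.isClosed (s := a + n * η) ?_ ?_ (by linarith) ih ?_
      · have : 0 ≤ n * η := by positivity
        linarith
      · push_cast; linarith
      · exact hbox _ _ _ _ (by push_cast; linarith) le_rfl
  have hall : ∀ (a c : ℝ) (n m : ℕ), Good X f (Box a (a + n * η) c (c + (m + 1 : ℕ) * η)) := by
    intro a c n m
    induction m with
    | zero => simpa using hrow a c n
    | succ m ih =>
      refine merge_im hX.isClosed (s := c + (m + 1 : ℕ) * η) ?_ ?_ ?_ ih ?_
      · have : 0 ≤ n * η := by positivity
        linarith
      · have : 0 ≤ (m + 1 : ℕ) * η := by positivity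
        linarith
      · push_cast; linarith
      · have := hrow a (c + (m + 1 : ℕ) * η) n
        convert this using 2
        push_cast; ring
  obtain ⟨M, hM⟩ := hX.isBounded.exists_norm_le
  obtain ⟨n, hn⟩ := exists_nat_ge (2 * M / η)
  have hn' : 2 * M ≤ n * η := by rwa [div_le_iff₀ hηpos] at hn
  obtain ⟨r, hr, g, hg, hge⟩ := hall (-M) (-M) n n
  have hXB : ∀ x : X, (x : ℂ) ∈ Box (-M) (-M + n * η) (-M) (-M + (n + 1 : ℕ) * η) := by
    intro x
    have h1 := abs_le.1 ((Complex.abs_re_le_norm x).trans (hM x x.2))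
    have h2 := abs_le.1 ((Complex.abs_im_le_norm x).trans (hM x x.2))
    rw [mem_Box]
    push_cast
    refine ⟨⟨?_, ?_⟩, ?_, ?_⟩ <;> linarith
  refine ⟨r, Hsub_mono X (subset_univ _) hr, g, ?_, fun x => hge x (hXB x)⟩
  rw [← continuousOn_univ]
  exact hg.mono fun x _ => hXB x

theorem clsSet_span {X : Set ℂ} (hX : IsCompact X) :
    ⊤ ≤ Submodule.span ℤ (range (fun e : clsSet X => (e : Coh X))) := by
  have hH : ∀ r ∈ Hsub X univ, cls r ∈ Submodule.span ℤ (range (fun e : clsSet X => (e : Coh X))) := by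
    intro r hr
    induction hr using Subgroup.closure_induction with
    | mem f hf =>
      obtain ⟨c, -, rfl⟩ := hf
      by_cases h0 : cls (lin X c) = 0
      · rw [h0]; exact zero_mem _
      · exact Submodule.subset_span ⟨⟨_, h0, c, rfl⟩, rfl⟩
    | one => rw [cls_one]; exact zero_mem _
    | mul a b _ _ ha hb => rw [cls_mul]; exact add_mem ha hb
    | inv a _ ha => rw [cls_inv]; exact neg_mem ha
  intro e _
  obtain ⟨f, rfl⟩ : ∃ f, cls f = e := QuotientGroup.mk_surjective e
  obtain ⟨r, hr, h⟩ := spanning hX f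
  rw [cls_eq h]
  exact hH r hr

theorem eq_zero_of_divisible {X : Set ℂ} (hX : IsCompact X) (e : Coh X)
    (h : ∀ N : ℕ, ∃ m : ℕ, N < m ∧ ∃ e' : Coh X, e = m • e') : e = 0 := by
  let b := Module.Basis.mk (clsSet_indep hX) (clsSet_span hX)
  apply b.repr.injective
  rw [map_zero]
  ext i
  rw [Finsupp.zero_apply]
  obtain ⟨m, hm, e', he'⟩ := h (b.repr e i).natAbs
  have h1 : (m : ℤ) ∣ b.repr e i := by
    refine ⟨b.repr e' i, ?_⟩
    conv_lhs => rw [he']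
    simp
  exact Int.eq_zero_of_abs_lt_dvd h1 (by rw [Int.abs_eq_natAbs]; exact_mod_cast hm)

theorem isClosed_solenoid (w : ℕ → ℕ) : IsClosed (solenoidSubgroup w : Set (ℕ → Circle)) := by
  have : (solenoidSubgroup w : Set (ℕ → Circle)) = ⋂ n, {x | x n = x (n + 1) ^ w n} := by
    ext x; simp [solenoidSubgroup]
  rw [this]
  exact isClosed_iInter fun n => isClosed_eq (by fun_prop) (by fun_prop)

instance (w : ℕ → ℕ) : CompactSpace (Solenoid w) :=
  isCompact_iff_compactSpace.1 (isClosed_solenoid w).isCompact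

/-- Partial products of the type of the solenoid. -/
def W (w : ℕ → ℕ) (n : ℕ) : ℕ := ∏ i ∈ Finset.range n, w i

theorem lt_W {w : ℕ → ℕ} (hw : ∀ n, 1 < w n) (n : ℕ) : n < W w n := by
  induction n with
  | zero => simp [W]
  | succ n ih =>
    have h1 : W w (n + 1) = W w n * w n := Finset.prod_range_succ _ _
    have := hw n
    rw [h1]
    nlinarith

theorem zero_eq_pow {w : ℕ → ℕ} (x : Solenoid w) (n : ℕ) :
    (x : ℕ → Circle) 0 = (x : ℕ → Circle) n ^ W w n := by
  induction n with
  | zero => simp [W]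
  | succ n ih =>
    have h1 : W w (n + 1) = W w n * w n := Finset.prod_range_succ _ _
    have h2 : (x : ℕ → Circle) n = (x : ℕ → Circle) (n + 1) ^ w n := x.2 n
    rw [ih, h1, h2, ← pow_mul, mul_comm]

/-- The standard one-parameter subgroup. -/
noncomputable def flow {w : ℕ → ℕ} (hw : ∀ n, 1 < w n) (t : ℝ) : Solenoid w :=
  ⟨fun n => Circle.exp (t / W w n), by
    intro n
    have h1 : W w (n + 1) = W w n * w n := Finset.prod_range_succ _ _
    have h2 : (w n : ℝ) ≠ 0 := Nat.cast_ne_zero.2 (by have := hw n; omega)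
    have h3 : (W w n : ℝ) ≠ 0 := Nat.cast_ne_zero.2 (by have := lt_W hw n; omega)
    simp only
    rw [← Circle.exp_natCast_mul, h1]
    congr 1
    push_cast
    field_simp⟩

theorem continuous_flow {w : ℕ → ℕ} (hw : ∀ n, 1 < w n) : Continuous (flow hw) := by
  unfold flow
  refine Continuous.subtype_mk (continuous_pi fun n => ?_) _
  fun_prop

theorem no_log {w : ℕ → ℕ} (hw : ∀ n, 1 < w n) (g : Solenoid w → ℂ) (hg : Continuous g)
    (h : ∀ x : Solenoid w, (((x : ℕ → Circle) 0 : Circle) : ℂ) = Complex.exp (g x)) : False := by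
  have h1 := const_of_exp_eq_one (fun t : ℝ => g (flow hw t) - t * Complex.I)
    ((hg.comp (continuous_flow hw)).sub (by fun_prop)) (by
      intro t
      rw [Complex.exp_sub, ← h]
      simp [flow, W])
  obtain ⟨M, hM⟩ := (isCompact_range hg).isBounded.exists_norm_le
  have hM0 : 0 ≤ M := (norm_nonneg _).trans (hM _ ⟨flow hw 0, rfl⟩)
  have h2 := h1 (2 * M + 1) 0
  simp only [Complex.ofReal_zero, zero_mul, sub_zero] at h2
  have h3 : ((2 * M + 1 : ℝ) : ℂ) * Complex.I = g (flow hw (2 * M + 1)) - g (flow hw 0) := by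
    linear_combination -h2
  have h4 : ‖((2 * M + 1 : ℝ) : ℂ) * Complex.I‖ = 2 * M + 1 := by
    rw [norm_mul, Complex.norm_I, mul_one, Complex.norm_real, Real.norm_eq_abs,
      abs_of_nonneg (by positivity)]
  have h5 := norm_sub_le (g (flow hw (2 * M + 1))) (g (flow hw 0))
  rw [← h3, h4] at h5
  have h6 := hM _ ⟨flow hw (2 * M + 1), rfl⟩
  have h7 := hM _ ⟨flow hw 0, rfl⟩
  linarith

theorem no_embedding_plane {w : ℕ → ℕ} (hw : ∀ n, 1 < w n) (j : Solenoid w → ℂ)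
    (hj : IsEmbedding j) : False := by
  let h := hj.toHomeomorph
  have hX : IsCompact (range j) := isCompact_range hj.continuous
  let χ : ℕ → C(range j, ℂˣ) := fun n =>
    mkU (fun x => (((h.symm x : Solenoid w) : ℕ → Circle) n : ℂ))
      (continuous_subtype_val.comp ((continuous_apply n).comp
        (continuous_subtype_val.comp h.symm.continuous)))
      (fun x => Circle.coe_ne_zero _)
  have hχ : ∀ n, χ 0 = χ n ^ W w n := by
    intro n
    ext x
    rw [ContinuousMap.pow_apply, Units.val_pow_eq_pow_val]
    simp only [χ, mkU_apply]
    rw [zero_eq_pow _ n, Circle.coe_pow]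
  have h0 : cls (χ 0) = 0 := by
    refine eq_zero_of_divisible hX _ fun N => ⟨W w N, lt_W hw N, cls (χ N), ?_⟩
    rw [← cls_pow, ← hχ]
  obtain ⟨g, hg, hge⟩ := cls_eq_zero.1 h0
  refine no_log hw (fun x => g (h x)) (hg.comp h.continuous) fun x => ?_
  rw [← hge]
  simp [χ]

theorem sphere_chart (p : Metric.sphere (0 : EuclideanSpace ℝ (Fin 3)) 1) :
    ∃ e : OpenPartialHomeomorph (Metric.sphere (0 : EuclideanSpace ℝ (Fin 3)) 1) ℂ, e.source = {p}ᶜ ∧ e.target = univ := by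
  have : Fact (Module.finrank ℝ (EuclideanSpace ℝ (Fin 3)) = 2 + 1) := ⟨by simp⟩
  let T : ℂ ≃ₜ EuclideanSpace ℝ (Fin 2) := Complex.orthonormalBasisOneI.repr.toHomeomorph
  refine ⟨(stereographic' 2 p).transHomeomorph T.symm, ?_, ?_⟩
  · exact stereographic'_source p
  · show T.symm.symm ⁻¹' _ = _
    rw [stereographic'_target, preimage_univ]

/-- Continuous nonvanishing functions on a sphere-like space have logarithms. -/
theorem exists_log_charts {S : Type*} [TopologicalSpace S] [T1Space S]
    (hchart : ∀ p : S, ∃ e : OpenPartialHomeomorph S ℂ, e.source = {p}ᶜ ∧ e.target = univ)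
    (p q : S) (hpq : p ≠ q) (χ : S → ℂ) (hχ : Continuous χ) (h0 : ∀ y, χ y ≠ 0) :
    ∃ g : S → ℂ, Continuous g ∧ ∀ y, χ y = Complex.exp (g y) := by
  classical
  have hone : ∀ p : S, ∃ g : S → ℂ, ContinuousOn g {p}ᶜ ∧
        ∀ y ∈ ({p}ᶜ : Set S), χ y = Complex.exp (g y) := by
    intro p
    obtain ⟨e, hS, hT⟩ := hchart p
    have hes : Continuous e.symm := by
      have := e.continuousOn_symm
      rwa [hT, continuousOn_univ] at this
    obtain ⟨γ, hγ, hγe⟩ := exists_log_plane (fun z => χ (e.symm z))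
      (hχ.comp hes) (fun z => h0 _)
    have hce : ContinuousOn e {p}ᶜ := by
      have := e.continuousOn
      rwa [hS] at this
    refine ⟨fun y => γ (e y), hγ.comp_continuousOn hce, ?_⟩
    intro y hy
    rw [← hγe, e.left_inv (by rwa [hS])]
  obtain ⟨g₁, hg₁, he₁⟩ := hone p
  obtain ⟨g₂, hg₂, he₂⟩ := hone q
  obtain ⟨e, hS, hT⟩ := hchart p
  have hes : Continuous e.symm := by
    have := e.continuousOn_symm
    rwa [hT, continuousOn_univ] at this
  have hsrc : ∀ z, e.symm z ≠ p := fun z => by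
    have := e.map_target (x := z) (by rw [hT]; trivial)
    rwa [hS] at this
  have hY : PreconnectedSpace ({e q}ᶜ : Set (ℂ)) := by
    refine Subtype.preconnectedSpace (isConnected_compl_singleton_of_one_lt_rank ?_ _).isPreconnected
    rw [Complex.rank_real_complex]
    exact Cardinal.one_lt_two
  have hsrc2 : ∀ z : ({e q}ᶜ : Set (ℂ)), e.symm z ≠ q := by
    rintro ⟨z, hz⟩ h
    apply hz
    have := e.right_inv (x := z) (by rw [hT]; trivial)
    rw [← h]; exact this.symm
  have hconst := const_of_exp_eq_one
    (fun z : ({e q}ᶜ : Set (ℂ)) => g₁ (e.symm z) - g₂ (e.symm z))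
    ((hg₁.comp_continuous (hes.comp continuous_subtype_val) (fun z => hsrc z.1)).sub
      (hg₂.comp_continuous (hes.comp continuous_subtype_val) (fun z => hsrc2 z)))
    (fun z => by
      rw [Complex.exp_sub, ← he₁ _ (hsrc z), ← he₂ _ (hsrc2 z), div_self (h0 _)])
  obtain ⟨κ, hκ⟩ : ∃ κ : ℂ, ∀ y, y ≠ p → y ≠ q → g₁ y - g₂ y = κ := by
    have hmem : ∀ y, y ≠ p → y ≠ q → e y ∈ ({e q}ᶜ : Set (ℂ)) := by
      intro y hyp hyq h
      exact hyq (e.injOn (by rw [hS]; exact hyp)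
        (by rw [hS]; exact hpq.symm) h)
    by_cases hex : ∃ y₀, y₀ ≠ p ∧ y₀ ≠ q
    · obtain ⟨y₀, hy₀p, hy₀q⟩ := hex
      refine ⟨g₁ y₀ - g₂ y₀, fun y hyp hyq => ?_⟩
      have := hconst ⟨e y, hmem y hyp hyq⟩ ⟨e y₀, hmem y₀ hy₀p hy₀q⟩
      simpa only [e.left_inv (show y ∈ e.source by rw [hS]; exact hyp),
        e.left_inv (show y₀ ∈ e.source by rw [hS]; exact hy₀p)] using this
    · push Not at hex
      exact ⟨0, fun y hyp hyq => absurd (hex y hyp) hyq⟩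
  have hκ1 : Complex.exp κ = 1 := by
    obtain ⟨z, hz⟩ := exists_ne (e q)
    rw [← hκ (e.symm z) (hsrc z) (hsrc2 ⟨z, hz⟩), Complex.exp_sub, ← he₁ _ (hsrc z),
      ← he₂ _ (hsrc2 ⟨z, hz⟩), div_self (h0 _)]
  let g : S → ℂ :=
    fun y => if y = p then g₂ y + κ else g₁ y
  have hgp : ∀ y, y ≠ p → g y = g₁ y := fun y hy => by simp [g, hy]
  have hgq : ∀ y, y ≠ q → g y = g₂ y + κ := fun y hy => by
    by_cases hyp : y = p
    · simp [g, hyp]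
    · rw [hgp y hyp, ← hκ y hyp hy]; ring
  refine ⟨g, ?_, ?_⟩
  · rw [continuous_iff_continuousAt]
    intro y
    by_cases hyp : y = p
    · have hyq : y ≠ q := hyp ▸ hpq
      have ho : ({q}ᶜ : Set _) ∈ 𝓝 y := isOpen_compl_singleton.mem_nhds hyq
      refine ((hg₂.continuousAt ho).add continuousAt_const).congr (f := fun y => g₂ y + κ) ?_
      filter_upwards [ho] with y' hy'
      exact (hgq y' hy').symm
    · have ho : ({p}ᶜ : Set _) ∈ 𝓝 y := isOpen_compl_singleton.mem_nhds hyp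
      refine (hg₁.continuousAt ho).congr ?_
      filter_upwards [ho] with y' hy'
      exact (hgp y' hy').symm
  · intro y
    by_cases hyp : y = p
    · have hyq : y ≠ q := hyp ▸ hpq
      rw [hgq y hyq, Complex.exp_add, hκ1, mul_one]
      exact he₂ y hyq
    · rw [hgp y hyp]
      exact he₁ y hyp

/-- Continuous nonvanishing functions on the sphere have logarithms. -/
theorem exists_log_sphere (χ : Metric.sphere (0 : EuclideanSpace ℝ (Fin 3)) 1 → ℂ)
    (hχ : Continuous χ) (h0 : ∀ y, χ y ≠ 0) :
    ∃ g : Metric.sphere (0 : EuclideanSpace ℝ (Fin 3)) 1 → ℂ, Continuous g ∧ ∀ y, χ y = Complex.exp (g y) := by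
  obtain ⟨p⟩ : Nonempty (Metric.sphere (0 : EuclideanSpace ℝ (Fin 3)) 1) :=
    (NormedSpace.sphere_nonempty.2 zero_le_one).to_subtype
  exact exists_log_charts sphere_chart p (-p) (ne_neg_of_mem_unit_sphere ℝ p) χ hχ h0

theorem main (w : ℕ → ℕ) (hw : ∀ n, 1 < w n)
    (f : Solenoid w → ↥(Metric.sphere (0 : EuclideanSpace ℝ (Fin 3)) 1)) (hf : IsEmbedding f) :
    False := by
  by_cases hs : Function.Surjective f
  · let h := hf.toHomeomorphOfSurjective hs
    obtain ⟨g, hg, hge⟩ := exists_log_sphere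
      (fun y => (((h.symm y : Solenoid w) : ℕ → Circle) 0 : ℂ))
      (continuous_subtype_val.comp ((continuous_apply 0).comp
        (continuous_subtype_val.comp h.symm.continuous)))
      (fun x => Circle.coe_ne_zero _)
    refine no_log hw (fun x => g (h x)) (hg.comp h.continuous) fun x => ?_
    rw [← hge, h.symm_apply_apply]
  · simp only [Function.Surjective, not_forall, not_exists] at hs
    obtain ⟨p, hp⟩ := hs
    obtain ⟨e, hS, -⟩ := sphere_chart p
    have hmem : ∀ x, f x ∈ e.source := fun x => by rw [hS]; exact hp x
    have hc : Continuous fun x => e (f x) :=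
      e.continuousOn.comp_continuous hf.continuous hmem
    have hinj : Function.Injective fun x => e (f x) := fun x y hxy =>
      hf.injective (e.injOn (hmem x) (hmem y) hxy)
    exact no_embedding_plane hw _ (hc.isClosedEmbedding hinj).isEmbedding

end SolenoidAux

/-- **No solenoid embeds into the 2-sphere** S² = {v ∈ ℝ³ : ‖v‖ = 1}. -/
theorem no_embedding_of_solenoid_into_sphere
    (w : ℕ → ℕ) (hw : ∀ n, 1 < w n) :
    ¬ ∃ f : Solenoid w → ↥(Metric.sphere (0 : EuclideanSpace ℝ (Fin 3)) 1),
      IsEmbedding f := by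
  rintro ⟨f, hf⟩
  exact SolenoidAux.main w hw f hf
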